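/- Suppose the digraph is acyclic, all edge weights are positive, the digraph has a globally reachable vertex, and the first n−1 edges form a rooted in-branching with root the vertex indexed n−1. Let k be any edge index and let δ ∈ ℝ satisfy |δ| < Σ_{e : tail e = tail k} w e (the sum of the nominal weights of all edges sharing the tail of edge k, i.e., the out-degree weight sum of its parent node). Let W_δ be the m×m diagonal matrix equal to W except that its (k,k) entry is w k + δ. Then every eigenvalue λ ∈ ℂ of the perturbed reduced edge Laplacian Eτᵀ * A * W_δ * Rᵀ (viewed as a complex matrix) has strictly positive real part. -/

import Mathlib

open Matrix


theorem aux_const {K : Type*} [Field K] (n : ℕ) (t h : Fin (n-1) → Fin n) (root : Fin n)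
    (hreach : ∀ v : Fin n, Relation.ReflTransGen (fun a b => ∃ i, t i = a ∧ h i = b) v root)
    (y : Fin n → K) (hy : ∀ i, y (t i) - y (h i) = 0) (v : Fin n) : y v = y root := by
  induction hreach v using Relation.ReflTransGen.head_induction_on with
  | refl => rfl
  | head h1 _ ih =>
    obtain ⟨i, rfl, rfl⟩ := h1
    rw [← ih]; exact sub_eq_zero.mp (hy i)

theorem aux_surj {K : Type*} [Field K] (n : ℕ) (hn : 2 ≤ n)
    (t h : Fin (n-1) → Fin n) (root : Fin n)
    (hreach : ∀ v : Fin n, Relation.ReflTransGen (fun a b => ∃ i, t i = a ∧ h i = b) v root)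
    (x : Fin (n-1) → K) : ∃ y : Fin n → K, y root = 0 ∧ ∀ i, y (t i) - y (h i) = x i := by
  let φ : (Fin n → K) →ₗ[K] (Fin (n-1) → K) × K :=
    { toFun := fun y => (fun i => y (t i) - y (h i), y root)
      map_add' := by
        intro a b
        refine Prod.ext (funext fun i => ?_) rfl
        simp only [Pi.add_apply, Prod.fst_add]
        ring
      map_smul' := by
        intro c a
        refine Prod.ext (funext fun i => ?_) rfl
        simp only [Pi.smul_apply, Prod.smul_fst, smul_eq_mul, RingHom.id_apply]
        ring }
  have hφ : Function.Injective φ := by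
    rw [injective_iff_map_eq_zero]
    intro y hy
    have h1 : ∀ i, y (t i) - y (h i) = 0 := fun i => congrFun (congrArg Prod.fst hy) i
    have h2 : y root = 0 := congrArg Prod.snd hy
    funext v
    rw [aux_const n t h root hreach y h1 v, h2]; rfl
  have hd : Module.finrank K (Fin n → K) = Module.finrank K ((Fin (n-1) → K) × K) := by
    simp; omega
  have hs := (LinearMap.injective_iff_surjective_of_finrank_eq_finrank hd).mp hφ
  obtain ⟨y, hy⟩ := hs (x, 0)
  exact ⟨y, congrArg Prod.snd hy, fun i => congrFun (congrArg Prod.fst hy) i⟩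

theorem aux_inc {K : Type*} [Field K] {n : ℕ} (a b : Fin n) (hab : a ≠ b) (y : Fin n → K) :
    ∑ v, (if v = a then (1:K) else if v = b then -1 else 0) * y v = y a - y b := by
  have : ∀ v, (if v = a then (1:K) else if v = b then -1 else 0) * y v
      = (if v = a then y v else 0) - (if v = b then y v else 0) := by
    intro v
    by_cases h1 : v = a
    · subst h1; simp [hab]
    · by_cases h2 : v = b <;> simp [h1, h2]
      subst h2; simp [h1]
  simp [this]

/-- For an acyclic weighted digraph with positive weights, a globally
reachable vertex, and whose first `n-1` edges form a rooted in-branching with root the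
vertex `n-1`, if one edge weight `w k` is perturbed by `δ` with `|δ|` less than the sum
of the weights of all edges sharing the tail of `e_k`, then all complex eigenvalues of
the perturbed reduced edge Laplacian `Eτᵀ * A * W_δ * Rᵀ` have positive real part. -/
theorem perturbed_reduced_edgeLaplacian_robust_acyclic
    (n m : ℕ) (hn : 2 ≤ n) (hm : 1 ≤ m) (hmn : n - 1 ≤ m)
    (tail head : Fin m → Fin n) (hth : ∀ e, tail e ≠ head e)
    (w : Fin m → ℝ) (hw : ∀ e, 0 < w e)
    (E : Matrix (Fin n) (Fin m) ℝ)
    (hE : ∀ v e, E v e = if v = tail e then 1 else if v = head e then -1 else 0)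
    (A : Matrix (Fin n) (Fin m) ℝ)
    (hA : ∀ v e, A v e = if v = tail e then 1 else 0)
    (W : Matrix (Fin m) (Fin m) ℝ) (hW : W = Matrix.diagonal w)
    (hgr : ∃ v : Fin n, ∀ u : Fin n,
      Relation.ReflTransGen (fun a b => ∃ e, tail e = a ∧ head e = b) u v)
    (hacyclic : ∀ v : Fin n,
      ¬ Relation.TransGen (fun a b => ∃ e, tail e = a ∧ head e = b) v v)
    (root : Fin n) (hroot : root = ⟨n - 1, by omega⟩)
    -- the first n-1 edges form a rooted in-branching with root `root`:
    (hinj : Function.Injective (fun i : Fin (n - 1) => tail ⟨i.val, lt_of_lt_of_le i.2 hmn⟩))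
    (hnotroot : ∀ i : Fin (n - 1), tail ⟨i.val, lt_of_lt_of_le i.2 hmn⟩ ≠ root)
    (hsurj : ∀ v : Fin n, v ≠ root → ∃ i : Fin (n - 1), tail ⟨i.val, lt_of_lt_of_le i.2 hmn⟩ = v)
    (hreach : ∀ v : Fin n, Relation.ReflTransGen
      (fun a b => ∃ e : Fin m, e.val < n - 1 ∧ tail e = a ∧ head e = b) v root)
    (Eτ : Matrix (Fin n) (Fin (n - 1)) ℝ)
    (hEτ : Eτ = E.submatrix id (fun i : Fin (n - 1) => ⟨i.val, lt_of_lt_of_le i.2 hmn⟩))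
    (Ec : Matrix (Fin n) (Fin (m - (n - 1))) ℝ)
    (hEc : Ec = E.submatrix id
      (fun j : Fin (m - (n - 1)) => ⟨n - 1 + j.val, by have := j.2; omega⟩))
    (Tτ : Matrix (Fin (n - 1)) (Fin (m - (n - 1))) ℝ)
    (hTτ : Tτ = (Eτᵀ * Eτ)⁻¹ * Eτᵀ * Ec)
    (R : Matrix (Fin (n - 1)) (Fin m) ℝ)
    (hR : ∀ (i : Fin (n - 1)) (j : Fin m), R i j =
      if h : j.val < n - 1 then (if i.val = j.val then 1 else 0)
      else Tτ i ⟨j.val - (n - 1), by have := j.2; omega⟩)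
    (k : Fin m) (δ : ℝ)
    (hδ : |δ| < ∑ e ∈ Finset.univ.filter (fun e => tail e = tail k), w e)
    (Wδ : Matrix (Fin m) (Fin m) ℝ)
    (hWδ : Wδ = Matrix.diagonal (fun e => if e = k then w k + δ else w e)) :
    ∀ μ : ℂ, (∃ x : Fin (n - 1) → ℂ, x ≠ 0 ∧
        ((Eτᵀ * A * Wδ * Rᵀ).map Complex.ofReal).mulVec x = μ • x) →
      0 < μ.re := by
  classical
  let ι : Fin (n-1) → Fin m := fun i => ⟨i.val, lt_of_lt_of_le i.2 hmn⟩
  let t : Fin (n-1) → Fin n := fun i => tail (ι i)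
  let h : Fin (n-1) → Fin n := fun i => head (ι i)
  have hr : ∀ v : Fin n, Relation.ReflTransGen (fun a b => ∃ i, t i = a ∧ h i = b) v root := by
    intro v
    refine Relation.ReflTransGen.mono ?_ _ _ (hreach v)
    rintro a b ⟨e, he, h1, h2⟩
    exact ⟨⟨e.val, he⟩, h1, h2⟩
  have hEy : ∀ (y : Fin n → ℝ) e, (Eᵀ *ᵥ y) e = y (tail e) - y (head e) := by
    intro y e
    rw [← aux_inc _ _ (hth e)]
    simp only [Matrix.mulVec, dotProduct, Matrix.transpose_apply, hE]
  have hEyC : ∀ (y : Fin n → ℂ) e,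
      ((Eᵀ).map Complex.ofReal *ᵥ y) e = y (tail e) - y (head e) := by
    intro y e
    rw [← aux_inc _ _ (hth e)]
    simp only [Matrix.mulVec, dotProduct, Matrix.transpose_apply, hE, Matrix.map_apply]
    refine Finset.sum_congr rfl fun v _ => ?_
    split_ifs <;> simp
  have hτy : ∀ (y : Fin n → ℝ) i, (Eτᵀ *ᵥ y) i = y (t i) - y (h i) := by
    intro y i
    rw [← hEy y (ι i), hEτ]; rfl
  have hτyC : ∀ (y : Fin n → ℂ) i,
      ((Eτᵀ).map Complex.ofReal *ᵥ y) i = y (t i) - y (h i) := by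
    intro y i
    rw [← hEyC y (ι i), hEτ]; rfl
  -- invertibility
  have hdet : IsUnit (Eτᵀ * Eτ).det := by
    rw [← Matrix.isUnit_iff_isUnit_det, ← Matrix.mulVec_injective_iff_isUnit]
    have h0 : ∀ z : Fin (n-1) → ℝ, (Eτᵀ * Eτ) *ᵥ z = 0 → z = 0 := by
      intro z hz
      have h1 : Eτ *ᵥ z = 0 := by
        have : (Eτ *ᵥ z) ⬝ᵥ (Eτ *ᵥ z) = 0 := by
          rw [Matrix.dotProduct_mulVec, ← Matrix.mulVec_transpose, Matrix.mulVec_mulVec, hz,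
            zero_dotProduct]
        exact dotProduct_self_eq_zero.mp this
      obtain ⟨y, -, hy⟩ := aux_surj n hn t h root hr z
      have h2 : Eτᵀ *ᵥ y = z := by
        funext i; rw [hτy, hy]
      have : z ⬝ᵥ z = 0 := by
        nth_rewrite 1 [← h2]
        rw [Matrix.mulVec_transpose, ← Matrix.dotProduct_mulVec, h1, dotProduct_zero]
      exact dotProduct_self_eq_zero.mp this
    intro a b hab
    have := h0 (a - b) (by rw [Matrix.mulVec_sub]; exact sub_eq_zero.mpr hab)
    exact sub_eq_zero.mp this
  have hEcT : Ec = Eτ * Tτ := by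
    have hD : Eτᵀ * (Ec - Eτ * Tτ) = 0 := by
      rw [Matrix.mul_sub, hTτ, ← Matrix.mul_assoc, ← Matrix.mul_assoc, ← Matrix.mul_assoc,
        Matrix.mul_nonsing_inv _ hdet, Matrix.one_mul, sub_self]
    have hsE : ∀ e, ∑ v, E v e = 0 := by
      intro e
      have := aux_inc (K := ℝ) (tail e) (head e) (hth e) (fun _ => 1)
      simpa [hE] using this
    have hsum : ∀ j, ∑ v, (Ec - Eτ * Tτ) v j = 0 := by
      intro j
      simp only [Matrix.sub_apply, Finset.sum_sub_distrib, Matrix.mul_apply]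
      rw [Finset.sum_comm]
      simp only [← Finset.sum_mul, hEτ, hEc, Matrix.submatrix_apply, id, hsE]
      simp
    rw [← sub_eq_zero]
    ext v j
    have hc := aux_const n t h root hr (fun v => (Ec - Eτ * Tτ) v j) (fun i => by
      exact (hτy (fun v => (Ec - Eτ * Tτ) v j) i).symm.trans (congrFun (congrFun hD i) j))
    have := hsum j
    rw [Finset.sum_congr rfl (fun v _ => hc v)] at this
    simp only [Finset.sum_const, Finset.card_univ, Fintype.card_fin, nsmul_eq_mul] at this
    have hn0 : (n:ℝ) ≠ 0 := by
      have : n ≠ 0 := by omega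
      exact_mod_cast this
    exact (hc v).trans ((mul_eq_zero.mp this).resolve_left hn0)
  have hER : E = Eτ * R := by
    ext v j
    rw [Matrix.mul_apply]
    by_cases hj : j.val < n - 1
    · rw [Finset.sum_eq_single ⟨j.val, hj⟩]
      · rw [hR, dif_pos hj, hEτ]; simp
      · intro b _ hb
        rw [hR, dif_pos hj, if_neg, mul_zero]
        intro hh; exact hb (Fin.ext hh)
      · simp
    · have h1 := congrFun (congrFun hEcT v) ⟨j.val - (n-1), by have := j.2; omega⟩
      simp only [Matrix.mul_apply] at h1
      have h2 : Ec v ⟨j.val - (n-1), by have := j.2; omega⟩ = E v j := by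
        rw [hEc]
        simp only [Matrix.submatrix_apply, id]
        congr 1
        apply Fin.ext
        simp only
        omega
      rw [← h2, h1]
      refine Finset.sum_congr rfl fun i _ => ?_
      rw [hR, dif_neg hj]
  rintro μ ⟨x, hx0, hx⟩
  obtain ⟨y, hyr, hy⟩ := aux_surj n hn t h root hr x
  have hyx : (Eτᵀ).map Complex.ofReal *ᵥ y = x := by
    funext i; rw [hτyC, hy]
  set wd : Fin m → ℝ := fun e => if e = k then w k + δ else w e with hwd
  have mapmul : ∀ {a b c : ℕ} (M : Matrix (Fin a) (Fin b) ℝ) (N : Matrix (Fin b) (Fin c) ℝ),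
      (M * N).map Complex.ofReal = M.map Complex.ofReal * N.map Complex.ofReal := by
    intro a b c M N
    exact Matrix.map_mul (f := Complex.ofRealHom)
  let Z : Fin n → ℂ := (A.map Complex.ofReal) *ᵥ ((Wδ.map Complex.ofReal) *ᵥ
    ((Eᵀ).map Complex.ofReal *ᵥ y))
  have hZ : ∀ v, Z v = ∑ e ∈ Finset.univ.filter (fun e => tail e = v),
      (wd e : ℂ) * (y (tail e) - y (head e)) := by
    intro v
    have h1 : ∀ e, ((Wδ.map Complex.ofReal) *ᵥ ((Eᵀ).map Complex.ofReal *ᵥ y)) e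
        = (wd e : ℂ) * (y (tail e) - y (head e)) := by
      intro e
      rw [← hEyC, hWδ, Matrix.diagonal_map (by simp), Matrix.mulVec_diagonal]
    rw [Finset.sum_filter]
    simp only [Z]
    rw [Matrix.mulVec, dotProduct]
    refine Finset.sum_congr rfl fun e _ => ?_
    rw [h1, Matrix.map_apply, hA]
    by_cases hv : v = tail e
    · simp [hv]
    · rw [if_neg hv, if_neg (Ne.symm hv)]; simp
  have hZτ : (Eτᵀ).map Complex.ofReal *ᵥ Z = μ • x := by
    rw [← hx, mapmul, mapmul, mapmul]
    simp only [Z, ← Matrix.mulVec_mulVec]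
    rw [← hyx, Matrix.mulVec_mulVec _ (Rᵀ.map _), ← mapmul, ← Matrix.transpose_mul, ← hER]
  have hnoroot : ∀ e, tail e ≠ root := by
    intro e he
    have h1 : Relation.ReflTransGen (fun a b => ∃ e, tail e = a ∧ head e = b) (head e) root :=
by
      refine Relation.ReflTransGen.mono ?_ _ _ (hreach (head e))
      rintro a b ⟨e, _, h⟩
      exact ⟨e, h⟩
    exact hacyclic root (Relation.TransGen.head' ⟨e, he, rfl⟩ h1)
  have hZr : Z root = 0 := by
    rw [hZ]
    apply Finset.sum_eq_zero
    intro e he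
    exact absurd (Finset.mem_filter.mp he).2 (hnoroot e)
  have hZy : ∀ v, Z v = μ * y v := by
    intro v
    have := aux_const n t h root hr (fun v => Z v - μ * y v) (fun i => by
      have h1 := congrFun hZτ i
      rw [hτyC, Pi.smul_apply, ← hy i, smul_eq_mul] at h1
      linear_combination h1) v
    simp only [hZr, hyr] at this
    linear_combination this
  have hyne : ∃ v, y v ≠ 0 := by
    by_contra hcon
    push Not at hcon
    apply hx0
    funext i
    rw [← hy i, hcon, hcon]; simp
  -- minimal element
  let S : Fin n → Fin n → Prop := fun b a =>
    Relation.TransGen (fun a b => ∃ e, tail e = a ∧ head e = b) a b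
  have : Std.Irrefl S := ⟨fun v => hacyclic v⟩
  have : IsTrans (Fin n) S := ⟨fun a b c h1 h2 => Relation.TransGen.trans h2 h1⟩
  have hwf : WellFounded S := Finite.wellFounded_of_trans_of_irrefl S
  obtain ⟨v, hv, hmin⟩ := hwf.has_min {v | y v ≠ 0} hyne
  have hv0 : y v ≠ 0 := hv
  have hhead : ∀ e, tail e = v → y (head e) = 0 := by
    intro e he
    by_contra hne
    exact hmin (head e) hne (Relation.TransGen.single ⟨e, he, rfl⟩)
  have hμ : μ = ((∑ e ∈ Finset.univ.filter (fun e => tail e = v), wd e : ℝ) : ℂ) := by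
    have h1 := hZy v
    rw [hZ] at h1
    apply mul_right_cancel₀ hv0
    rw [← h1]
    push_cast
    rw [Finset.sum_mul]
    refine Finset.sum_congr rfl fun e he => ?_
    have he' := (Finset.mem_filter.mp he).2
    rw [hhead e he', he', sub_zero]
  rw [hμ, Complex.ofReal_re]
  have hvr : v ≠ root := by
    rintro rfl; exact hv0 hyr
  by_cases hvk : tail k = v
  · have h1 : ∑ e ∈ Finset.univ.filter (fun e => tail e = v), wd e
        = (∑ e ∈ Finset.univ.filter (fun e => tail e = v), w e) + δ := by
      have h2 : ∀ e, wd e = w e + if e = k then δ else 0 := by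
        intro e
        simp only [hwd]
        split_ifs with hh
        · rw [hh]
        · simp
      simp only [h2, Finset.sum_add_distrib]
      rw [Finset.sum_ite_eq' , if_pos (by simp [hvk])]
    rw [h1]
    rw [hvk] at hδ
    linarith [neg_abs_le δ]
  · obtain ⟨i, hi⟩ := hsurj v hvr
    apply Finset.sum_pos
    · intro e he
      have he' := (Finset.mem_filter.mp he).2
      have : e ≠ k := by rintro rfl; exact hvk he'
      simp only [hwd, if_neg this]
      exact hw e
    · exact ⟨ι i, by simp [ι, hi]⟩
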